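/- arXiv:2101.03558 — 2 statements merged into one kernel-verified Lean document; each statement's English description precedes it below -/
import Mathlib

section
/- Let H be a real inner product space, let B > 0 and ρ > 0, let T be a positive integer, and set η = B/(ρ·√T). Let v₁, …, v_T ∈ H be arbitrary vectors with ‖vₜ‖ ≤ ρ for every t, and define the iterates w⁽¹⁾ = 0 and w⁽ᵗ⁺¹⁾ = w⁽ᵗ⁾ − η·vₜ. Then for every w⋆ ∈ H with ‖w⋆‖ ≤ B, the averaged linearized regret satisfies (1/T)·Σ_{t=1}^T ⟨w⁽ᵗ⁾ − w⋆, vₜ⟩ ≤ (B·ρ)/√T. -/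
open scoped RealInnerProductSpace BigOperators

/-!
The squared distance to the comparator is a potential: one step of size `η` along `v` changes
`‖w - u‖²` by exactly `-2η⟪w - u, v⟫ + η²‖v‖²`. Telescoping bounds the regret by
`‖w 0 - u‖² / (2η) + (η / 2) ∑ ‖v t‖² ≤ B² / (2η) + η T ρ² / 2`, and `η = B / (ρ√T)` is the step
size that balances the two terms.
-/

section

variable {H : Type*} [SeminormedAddCommGroup H] [InnerProductSpace ℝ H]

lemma norm_sub_smul_sub_sq (x u v : H) (η : ℝ) :
    ‖x - η • v - u‖ ^ 2 = ‖x - u‖ ^ 2 - 2 * (η * ⟪x - u, v⟫) + η ^ 2 * ‖v‖ ^ 2 := by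
  rw [sub_right_comm, norm_sub_sq_real, real_inner_smul_right, norm_smul, mul_pow,
    Real.norm_eq_abs, sq_abs]

variable {T : ℕ} {v : Fin T → H} {w : ℕ → H}

lemma two_mul_sum_step_mul_inner_eq {η : Fin T → ℝ}
    (hupd : ∀ t : Fin T, w (t + 1) = w t - η t • v t) (u : H) :
    2 * ∑ t : Fin T, η t * ⟪w t - u, v t⟫ =
      ‖w 0 - u‖ ^ 2 - ‖w T - u‖ ^ 2 + ∑ t, η t ^ 2 * ‖v t‖ ^ 2 := by
  have potential_drop (t : Fin T) : 2 * (η t * ⟪w t - u, v t⟫) =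
      (‖w t - u‖ ^ 2 - ‖w (t + 1) - u‖ ^ 2) + η t ^ 2 * ‖v t‖ ^ 2 := by
    rw [hupd, norm_sub_smul_sub_sq]
    ring
  have telescope : ∑ t : Fin T, (‖w t - u‖ ^ 2 - ‖w (t + 1) - u‖ ^ 2) =
      ‖w 0 - u‖ ^ 2 - ‖w T - u‖ ^ 2 := by
    rw [Fin.sum_univ_eq_sum_range (fun t ↦ ‖w t - u‖ ^ 2 - ‖w (t + 1) - u‖ ^ 2),
      Finset.sum_range_sub' (fun t ↦ ‖w t - u‖ ^ 2)]
  simp only [Finset.mul_sum, potential_drop, Finset.sum_add_distrib, telescope]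

lemma sum_inner_le_of_const_step {η : ℝ} (hη : 0 < η)
    (hupd : ∀ t : Fin T, w (t + 1) = w t - η • v t) (u : H) :
    ∑ t : Fin T, ⟪w t - u, v t⟫ ≤ ‖w 0 - u‖ ^ 2 / (2 * η) + η / 2 * ∑ t, ‖v t‖ ^ 2 := by
  have regret_eq := two_mul_sum_step_mul_inner_eq (η := fun _ ↦ η) hupd u
  simp only [← Finset.mul_sum] at regret_eq
  calc ∑ t : Fin T, ⟪w t - u, v t⟫
      = (‖w 0 - u‖ ^ 2 - ‖w T - u‖ ^ 2 + η ^ 2 * ∑ t, ‖v t‖ ^ 2) / (2 * η) := by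
        rw [← regret_eq]
        field_simp
    _ ≤ (‖w 0 - u‖ ^ 2 + η ^ 2 * ∑ t, ‖v t‖ ^ 2) / (2 * η) := by
        gcongr
        exact sub_le_self _ (sq_nonneg _)
    _ = ‖w 0 - u‖ ^ 2 / (2 * η) + η / 2 * ∑ t, ‖v t‖ ^ 2 := by
        field_simp

theorem gradient_descent_regret_bound_general {B ρ η : ℝ} (hB : 0 < B) (hρ : 0 < ρ) (hT : 0 < T)
    (hη : η = B / (ρ * √T)) (hv : ∑ t, ‖v t‖ ^ 2 ≤ T * ρ ^ 2)
    (hupd : ∀ t : Fin T, w (t + 1) = w t - η • v t) {u : H} (hu : ‖w 0 - u‖ ≤ B) :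
    1 / (T : ℝ) * ∑ t : Fin T, ⟪w t - u, v t⟫ ≤ B * ρ / √T := by
  have sqrt_pos : 0 < √(T : ℝ) := by positivity
  have sq_sqrt : √(T : ℝ) ^ 2 = T := Real.sq_sqrt T.cast_nonneg
  have η_pos : 0 < η := by rw [hη]; positivity
  calc 1 / (T : ℝ) * ∑ t : Fin T, ⟪w t - u, v t⟫
      ≤ 1 / (T : ℝ) * (‖w 0 - u‖ ^ 2 / (2 * η) + η / 2 * ∑ t, ‖v t‖ ^ 2) := by
        gcongr
        exact sum_inner_le_of_const_step η_pos hupd u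
    _ ≤ 1 / (T : ℝ) * (B ^ 2 / (2 * η) + η / 2 * (T * ρ ^ 2)) := by gcongr
    _ = B * ρ / √T := by
        rw [hη, ← sq_sqrt, Real.sqrt_sq sqrt_pos.le]
        field_simp
        ring

end

/-- **Deterministic regret bound for (sub)gradient descent** (core inequality
in the proof of Theorem 1 of the paper).  In a real inner product space, with
step size `η = B / (ρ√T)`, iterates `w⁽¹⁾ = 0`, `w⁽ᵗ⁺¹⁾ = w⁽ᵗ⁾ - η • vₜ`
(0-indexed here), and vectors `vₜ` of norm at most `ρ`, the averaged linearized
regret against any comparator `w⋆` with `‖w⋆‖ ≤ B` satisfies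
`(1/T) ∑ₜ ⟪w⁽ᵗ⁾ - w⋆, vₜ⟫ ≤ Bρ/√T`. -/
theorem gradient_descent_regret_bound
    {H : Type*} [NormedAddCommGroup H] [InnerProductSpace ℝ H]
    (B ρ : ℝ) (hB : 0 < B) (hρ : 0 < ρ)
    (T : ℕ) (hT : 0 < T)
    (η : ℝ) (hη : η = B / (ρ * Real.sqrt T))
    (v : Fin T → H) (hv : ∀ t, ‖v t‖ ≤ ρ)
    (w : ℕ → H) (hw0 : w 0 = 0)
    (hupd : ∀ t : Fin T, w (t + 1) = w t - η • v t) :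
    ∀ wstar : H, ‖wstar‖ ≤ B →
      (1 / (T : ℝ)) * ∑ t : Fin T, ⟪w t - wstar, v t⟫ ≤ B * ρ / Real.sqrt T := by
  intro wstar hwstar
  have hv_sq : ∑ t, ‖v t‖ ^ 2 ≤ T * ρ ^ 2 := by
    simpa using Finset.sum_le_card_nsmul Finset.univ (fun t ↦ ‖v t‖ ^ 2) (ρ ^ 2)
      fun t _ ↦ pow_le_pow_left₀ (norm_nonneg _) (hv t) 2
  exact gradient_descent_regret_bound_general hB hρ hT hη hv_sq hupd (by simpa [hw0] using hwstar)
end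

section
/- Let Ω be a finite nonempty type, let P : Ω → ℝ be a probability mass function, and let (Q_w)_{w ∈ W} be a family of probability mass functions on Ω indexed by a set W, with Q_w(x) > 0 whenever P(x) > 0, for every w ∈ W. Define the risk L(w) = −Σₓ P(x)·log Q_w(x). Suppose there exists w′ ∈ W with KL(P, Q_{w′}) = 0 and L(w′) = inf_{w ∈ W} L(w). If w̄ ∈ W satisfies L(w̄) ≤ inf_{w ∈ W} L(w) + ε for some ε ≥ 0, then: (a) KL(P, Q_{w̄}) ≤ ε, and (b) the total variation (ℓ₁) distance satisfies Σₓ |P(x) − Q_{w̄}(x)| ≤ √(2ε). -/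
open scoped BigOperators

/-- The Kullback–Leibler divergence between two probability mass functions on a
finite type, `KL(P, Q) = ∑ₓ P x * log (P x / Q x)` (with the convention
`0 * log (0 / q) = 0`, which holds automatically). -/
noncomputable def klDivergence {Ω : Type*} [Fintype Ω] (P Q : Ω → ℝ) : ℝ :=
  ∑ x, P x * Real.log (P x / Q x)

/-- The risk under the log loss: `L(w) = -∑ₓ P x * log (Q_w x)`. -/
noncomputable def logRisk {Ω W : Type*} [Fintype Ω]
    (P : Ω → ℝ) (Q : W → Ω → ℝ) (w : W) : ℝ :=
  -∑ x, P x * Real.log (Q w x)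

/-!
The risk `L(w)` and `KL(P, Q_w)` differ by the entropy of `P`, which does not depend on `w`, so the
excess risk of `w̄` over `w'` equals `KL(P, Q_w̄) - KL(P, Q_w') = KL(P, Q_w̄)`.

For Pinsker's inequality, write `KL(P, Q) = ∑ₓ Q x * φ (P x / Q x)` with `φ t = t log t + 1 - t`.
The convexity bound `3 (t - 1)² ≤ (2t + 4) φ(t)` becomes
`(p - q)² ≤ ((2p + 4q) / 3) * (q φ(p / q))`, and Cauchy–Schwarz yields
`(∑ |P - Q|)² ≤ (∑ (2P + 4Q) / 3) * KL(P, Q)`, whose first factor is `2` when `P` and `Q` have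
mass `1`.
-/

open InformationTheory

-- The difference of the two sides is convex: its second derivative is `4 (log t - (1 - t⁻¹))`.
lemma three_mul_sq_sub_one_le_mul_klFun {t : ℝ} (ht : 0 ≤ t) :
    3 * (t - 1) ^ 2 ≤ (2 * t + 4) * klFun t := by
  let g : ℝ → ℝ := fun s ↦ (2 * s + 4) * klFun s - 3 * (s - 1) ^ 2
  let g' : ℝ → ℝ := fun s ↦ 2 * klFun s + (2 * s + 4) * Real.log s - 6 * (s - 1)
  have hasDerivAt_g {s : ℝ} (hs : 0 < s) : HasDerivAt g (g' s) s := by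
    refine (((((hasDerivAt_id' s).const_mul 2).add_const 4).mul (hasDerivAt_klFun hs.ne')).sub
      ((((hasDerivAt_id' s).sub_const 1).pow 2).const_mul 3)).congr_deriv ?_
    simp only [g']
    ring
  have hasDerivAt_g' {s : ℝ} (hs : 0 < s) :
      HasDerivAt g' (4 * (Real.log s - (1 - s⁻¹))) s := by
    refine ((((hasDerivAt_klFun hs.ne').const_mul 2).add
      ((((hasDerivAt_id' s).const_mul 2).add_const 4).mul (Real.hasDerivAt_log hs.ne'))).sub
      (((hasDerivAt_id' s).sub_const 1).const_mul 6)).congr_deriv ?_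
    field_simp
    ring
  have convexOn_g : ConvexOn ℝ (Set.Ici 0) g := by
    refine convexOn_of_hasDerivWithinAt2_nonneg (f' := g')
      (f'' := fun s ↦ 4 * (Real.log s - (1 - s⁻¹))) (convex_Ici 0) (by fun_prop) ?_ ?_ ?_ <;>
      rw [interior_Ici] <;> intro s hs
    · exact (hasDerivAt_g hs).hasDerivWithinAt
    · exact (hasDerivAt_g' hs).hasDerivWithinAt
    · exact mul_nonneg zero_le_four (sub_nonneg.2 (Real.one_sub_inv_le_log_of_pos hs))
  have isMinOn_g : IsMinOn g (Set.Ici 0) 1 := by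
    refine convexOn_g.isMinOn_of_rightDeriv_eq_zero (by simp) ?_
    rw [(hasDerivAt_g one_pos).hasDerivWithinAt.derivWithin (uniqueDiffWithinAt_Ioi 1)]
    simp [g', klFun_one]
  have g_one : g 1 = 0 := by simp [g, klFun_one]
  exact sub_nonneg.1 (g_one ▸ isMinOn_g ht)

lemma sq_sub_le_mul_klFun_div {p q : ℝ} (hp : 0 ≤ p) (hq : 0 ≤ q) (hac : q = 0 → p = 0) :
    (p - q) ^ 2 ≤ (2 * p + 4 * q) / 3 * (q * klFun (p / q)) := by
  rcases hq.eq_or_lt' with rfl | hq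
  · simp [hac rfl]
  · calc (p - q) ^ 2 = q ^ 2 / 3 * (3 * (p / q - 1) ^ 2) := by field_simp
      _ ≤ q ^ 2 / 3 * ((2 * (p / q) + 4) * klFun (p / q)) :=
        mul_le_mul_of_nonneg_left (three_mul_sq_sub_one_le_mul_klFun (div_nonneg hp hq.le))
          (by positivity)
      _ = (2 * p + 4 * q) / 3 * (q * klFun (p / q)) := by field_simp

section FiniteDistributions

variable {Ω : Type*} [Fintype Ω] {P Q : Ω → ℝ}

lemma sum_mul_klFun_div (hac : ∀ x, Q x = 0 → P x = 0) :
    ∑ x, Q x * klFun (P x / Q x) = klDivergence P Q + ∑ x, Q x - ∑ x, P x := by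
  rw [klDivergence, ← Finset.sum_add_distrib, ← Finset.sum_sub_distrib]
  refine Finset.sum_congr rfl fun x _ ↦ ?_
  rw [klFun_apply, mul_sub, mul_add, ← mul_assoc, mul_div_cancel_of_imp' (hac x), mul_one]

lemma sq_sum_abs_sub_le_mul_klDivergence (hP : ∀ x, 0 ≤ P x) (hQ : ∀ x, 0 ≤ Q x)
    (hac : ∀ x, Q x = 0 → P x = 0) :
    (∑ x, |P x - Q x|) ^ 2 ≤
      (2 * ∑ x, P x + 4 * ∑ x, Q x) / 3 * (klDivergence P Q + ∑ x, Q x - ∑ x, P x) := by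
  have cauchy_schwarz : (∑ x, |P x - Q x|) ^ 2 ≤
      (∑ x, (2 * P x + 4 * Q x) / 3) * ∑ x, Q x * klFun (P x / Q x) := by
    refine Finset.sum_sq_le_sum_mul_sum_of_sq_le_mul _ (fun x _ ↦ ?_) (fun x _ ↦ ?_) fun x _ ↦ ?_
    · linarith [hP x, hQ x]
    · exact mul_nonneg (hQ x) (klFun_nonneg (div_nonneg (hP x) (hQ x)))
    · rw [sq_abs]
      exact sq_sub_le_mul_klFun_div (hP x) (hQ x) (hac x)
  rwa [sum_mul_klFun_div hac, ← Finset.sum_div, Finset.sum_add_distrib, ← Finset.mul_sum,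
    ← Finset.mul_sum] at cauchy_schwarz

lemma pinsker_inequality (hP : ∀ x, 0 ≤ P x) (hPsum : ∑ x, P x = 1)
    (hQ : ∀ x, 0 ≤ Q x) (hQsum : ∑ x, Q x = 1) (hac : ∀ x, Q x = 0 → P x = 0) :
    ∑ x, |P x - Q x| ≤ √(2 * klDivergence P Q) := by
  refine Real.le_sqrt_of_sq_le ((sq_sum_abs_sub_le_mul_klDivergence hP hQ hac).trans_eq ?_)
  rw [hPsum, hQsum]
  ring

/-- The Shannon entropy `H(P) = -∑ₓ P x * log (P x)`, in nats: the part of the log-loss risk that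
no choice of model can remove. -/
noncomputable def shannonEntropy (P : Ω → ℝ) : ℝ :=
  ∑ x, Real.negMulLog (P x)

lemma logRisk_eq_klDivergence_add_shannonEntropy {W : Type*} {Q : W → Ω → ℝ} {w : W}
    (hac : ∀ x, Q w x = 0 → P x = 0) :
    logRisk P Q w = klDivergence P (Q w) + shannonEntropy P := by
  rw [logRisk, klDivergence, shannonEntropy, ← Finset.sum_neg_distrib, ← Finset.sum_add_distrib]
  refine Finset.sum_congr rfl fun x _ ↦ ?_
  by_cases hPx : P x = 0
  · simp [hPx]
  · rw [Real.negMulLog, Real.log_div hPx (mt (hac x) hPx)]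
    ring

lemma klDivergence_sub_eq_logRisk_sub {W : Type*} {Q : W → Ω → ℝ} {v w : W}
    (hv : ∀ x, Q v x = 0 → P x = 0) (hw : ∀ x, Q w x = 0 → P x = 0) :
    klDivergence P (Q v) - klDivergence P (Q w) = logRisk P Q v - logRisk P Q w := by
  rw [logRisk_eq_klDivergence_add_shannonEntropy hv, logRisk_eq_klDivergence_add_shannonEntropy hw,
    add_sub_add_right_eq_sub]

end FiniteDistributions

/-- **Lemma 1 of the paper.**  Let `P` be a probability mass function on a
finite nonempty type `Ω` and `(Q_w)_{w ∈ W}` a family of probability mass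
functions with `Q_w x > 0` whenever `P x > 0`.  Suppose some `w'` has
`KL(P, Q_{w'}) = 0` and attains the infimum of the log-loss risk
`L(w) = -∑ₓ P x * log (Q_w x)`.  If `L(w̄) ≤ inf_w L(w) + ε` with `ε ≥ 0`,
then `KL(P, Q_w̄) ≤ ε` and (via Pinsker's inequality)
`∑ₓ |P x - Q_w̄ x| ≤ √(2ε)`. -/
theorem klDiv_le_and_l1_le_of_nearly_optimal_risk
    {Ω W : Type*} [Fintype Ω] [Nonempty Ω]
    (P : Ω → ℝ) (Q : W → Ω → ℝ)
    (hP : ∀ x, 0 ≤ P x) (hPsum : ∑ x, P x = 1)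
    (hQ : ∀ w x, 0 ≤ Q w x) (hQsum : ∀ w, ∑ x, Q w x = 1)
    (habs : ∀ w x, 0 < P x → 0 < Q w x)
    (w' : W) (hw'kl : klDivergence P (Q w') = 0)
    (hw'inf : logRisk P Q w' = ⨅ w, logRisk P Q w)
    (ε : ℝ) (hε : 0 ≤ ε)
    (wbar : W) (hwbar : logRisk P Q wbar ≤ (⨅ w, logRisk P Q w) + ε) :
    klDivergence P (Q wbar) ≤ ε ∧
    ∑ x, |P x - Q wbar x| ≤ Real.sqrt (2 * ε) := by
  have hac (w : W) (x : Ω) (hQx : Q w x = 0) : P x = 0 :=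
    le_antisymm (not_lt.1 fun hPx ↦ (habs w x hPx).ne' hQx) (hP x)
  have hkl : klDivergence P (Q wbar) ≤ ε := calc
    klDivergence P (Q wbar) = logRisk P Q wbar - logRisk P Q w' := by
      rw [← klDivergence_sub_eq_logRisk_sub (hac wbar) (hac w'), hw'kl, sub_zero]
    _ ≤ ε := by rwa [hw'inf, sub_le_iff_le_add']
  refine ⟨hkl, ?_⟩
  calc ∑ x, |P x - Q wbar x| ≤ √(2 * klDivergence P (Q wbar)) :=
        pinsker_inequality hP hPsum (hQ wbar) (hQsum wbar) (hac wbar)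
    _ ≤ √(2 * ε) := by gcongr
end
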